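/- arXiv:1710.00577 — 2 statements merged into one kernel-verified Lean document; each statement's English description precedes it below -/
import Mathlib

section
/- Every continuous unital ℂ-algebra homomorphism μ : A(D) → ℂ is a Dirac measure: there exists a unique point z₀ ∈ D such that μ(f) = f(z₀) for all f ∈ A(D). -/
noncomputable section
open Metric MvPolynomial

/-- The closed unit disk `D ⊆ ℂ`. -/
def Ddisk : Set ℂ := Metric.closedBall 0 1

instance : CompactSpace Ddisk := isCompact_iff_compactSpace.mp (isCompact_closedBall 0 1)

/-- The disk algebra `A(D)`: continuous functions on the closed unit disk that are
holomorphic on the open disk. -/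
def diskAlg : Subalgebra ℂ C(Ddisk, ℂ) where
  carrier := {f | ∃ F : ℂ → ℂ, DifferentiableOn ℂ F (Metric.ball (0 : ℂ) 1) ∧ ∀ z : Ddisk, f z = F z}
  mul_mem' := by
    rintro f g ⟨F, hF, hf⟩ ⟨G, hG, hg⟩
    exact ⟨F * G, hF.mul hG, fun z => by simp [hf z, hg z]⟩
  add_mem' := by
    rintro f g ⟨F, hF, hf⟩ ⟨G, hG, hg⟩
    exact ⟨F + G, hF.add hG, fun z => by simp [hf z, hg z]⟩
  algebraMap_mem' := by
    intro c
    exact ⟨fun _ => c, differentiableOn_const c, fun z => by simp⟩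

/-- The coordinate function as an element of the disk algebra. -/
def diskCoord : ↥diskAlg :=
  ⟨⟨fun z => (z : ℂ), continuous_subtype_val⟩, fun z => z, differentiableOn_id, fun _ => rfl⟩

/-- A function holomorphic near the closed disk gives an element of the disk algebra. -/
def diskOf (G : ℂ → ℂ) (R : ℝ) (hR : 1 < R) (hG : DifferentiableOn ℂ G (Metric.ball 0 R)) :
    ↥diskAlg :=
  ⟨⟨fun z => G z, by
    have h : ContinuousOn G Ddisk :=
      hG.continuousOn.mono (Metric.closedBall_subset_ball hR)
    exact h.domRestrict⟩, G, hG.mono (Metric.ball_subset_ball hR.le), fun _ => rfl⟩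

lemma coord_mem (μ : ↥diskAlg →ₐ[ℂ] ℂ) : μ diskCoord ∈ Ddisk := by
  by_contra h
  have h1 : 1 < ‖μ diskCoord‖ := by simpa [Ddisk] using h
  set l := μ diskCoord with hl
  have hd : DifferentiableOn ℂ (fun z : ℂ => (z - l)⁻¹) (Metric.ball 0 ‖l‖) := by
    intro z hz
    have hz' : ‖z‖ < ‖l‖ := by simpa using hz
    have : z - l ≠ 0 := by
      intro h0
      rw [sub_eq_zero.mp h0] at hz'
      exact lt_irrefl _ hz'
    exact ((differentiableAt_id.sub_const l).inv this).differentiableWithinAt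
  have e : (diskCoord - algebraMap ℂ _ l) * diskOf _ _ h1 hd = 1 := by
    apply Subtype.ext
    ext z
    have hz : ‖(z : ℂ)‖ ≤ 1 := by simpa [Ddisk] using z.2
    have : (z : ℂ) - l ≠ 0 := by
      intro h0
      rw [sub_eq_zero.mp h0] at hz
      linarith
    exact mul_inv_cancel₀ this
  have e2 := congrArg μ e
  rw [map_mul, map_sub, AlgHom.commutes, map_one, ← hl] at e2
  simp at e2

lemma eval_diskOf (μ : ↥diskAlg →ₐ[ℂ] ℂ) (G : ℂ → ℂ) (R : ℝ) (hR : 1 < R)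
    (hG : DifferentiableOn ℂ G (Metric.ball 0 R)) :
    μ (diskOf G R hR hG) = G (μ diskCoord) := by
  set l := μ diskCoord with hl
  have hm : l ∈ Metric.ball (0 : ℂ) R := Metric.closedBall_subset_ball hR (coord_mem μ)
  have hd : DifferentiableOn ℂ (dslope G l) (Metric.ball 0 R) :=
    (Complex.differentiableOn_dslope (Metric.isOpen_ball.mem_nhds hm)).2 hG
  have e : diskOf G R hR hG - algebraMap ℂ _ (G l)
      = (diskCoord - algebraMap ℂ _ l) * diskOf _ R hR hd := by
    apply Subtype.ext
    ext z
    exact (sub_smul_dslope G l z).symm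
  have e2 := congrArg μ e
  rw [map_mul, map_sub, map_sub, AlgHom.commutes, AlgHom.commutes, ← hl] at e2
  simpa [sub_eq_zero] using e2

/-- Radial contraction of the disk by the factor `1 / (1 + t ^ 2)`. -/
def contr : C(ℝ × Ddisk, Ddisk) where
  toFun p := ⟨(((1 + p.1 ^ 2)⁻¹ : ℝ) : ℂ) * p.2, by
    have hz : ‖(p.2 : ℂ)‖ ≤ 1 := mem_closedBall_zero_iff.1 p.2.2
    have h1 : (1 + p.1 ^ 2)⁻¹ ≤ 1 := inv_le_one_of_one_le₀ (by nlinarith [sq_nonneg p.1])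
    have h0 : 0 ≤ (1 + p.1 ^ 2)⁻¹ := by positivity
    simp only [Ddisk, mem_closedBall, dist_zero_right, norm_mul, Complex.norm_real,
      Real.norm_eq_abs, abs_of_nonneg h0]
    exact mul_le_one₀ h1 (norm_nonneg _) hz⟩
  continuous_toFun := by
    have : Continuous fun p : ℝ × Ddisk => (1 + p.1 ^ 2)⁻¹ :=
      Continuous.inv₀ (by fun_prop) (fun p => by positivity)
    exact Continuous.subtype_mk ((Complex.continuous_ofReal.comp this).mul (by fun_prop)) _

lemma scaled_mem (f : ↥diskAlg) (t : ℝ) :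
    (((f : C(Ddisk, ℂ)).comp contr).curry t) ∈ diskAlg := by
  obtain ⟨F, hF, hf⟩ := f.2
  refine ⟨fun z => F ((((1 + t ^ 2)⁻¹ : ℝ) : ℂ) * z), ?_, fun z => hf _⟩
  refine hF.comp (by fun_prop) ?_
  intro z hz
  have hz : ‖z‖ < 1 := by simpa using hz
  have h1 : (1 + t ^ 2)⁻¹ ≤ 1 := inv_le_one_of_one_le₀ (by nlinarith [sq_nonneg t])
  have h0 : 0 ≤ (1 + t ^ 2)⁻¹ := by positivity
  simp only [mem_ball, dist_zero_right, norm_mul, Complex.norm_real,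
    Real.norm_eq_abs, abs_of_nonneg h0]
  nlinarith [norm_nonneg z]

lemma eval_scaled (μ : ↥diskAlg →ₐ[ℂ] ℂ) (f : ↥diskAlg) (t : ℝ) (ht : t ≠ 0) :
    μ ⟨_, scaled_mem f t⟩ = (f : C(Ddisk, ℂ)) (contr (t, ⟨_, coord_mem μ⟩)) := by
  obtain ⟨F, hF, hf⟩ := f.2
  have hp : 0 < 1 + t ^ 2 := by positivity
  have hR : 1 < 1 + t ^ 2 := by have := pow_pos (abs_pos.2 ht) 2; rw [sq_abs] at this; linarith
  have hG : DifferentiableOn ℂ (fun z => F ((((1 + t ^ 2)⁻¹ : ℝ) : ℂ) * z))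
      (Metric.ball 0 (1 + t ^ 2)) := by
    refine hF.comp (by fun_prop) ?_
    intro z hz
    have hz : ‖z‖ < 1 + t ^ 2 := by simpa using hz
    simp only [mem_ball, dist_zero_right, norm_mul, Complex.norm_real,
      Real.norm_eq_abs, abs_of_pos (inv_pos.2 hp)]
    rw [inv_mul_lt_iff₀ hp]
    simpa using hz
  have e : (⟨_, scaled_mem f t⟩ : ↥diskAlg) = diskOf _ _ hR hG := by
    apply Subtype.ext
    ext z
    exact hf _
  rw [e, eval_diskOf]
  exact (hf (contr (t, ⟨_, coord_mem μ⟩))).symm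

/-- Every continuous unital `ℂ`-algebra homomorphism `μ : A(D) → ℂ` is a Dirac measure:
there is a unique `z₀ ∈ D` with `μ(f) = f(z₀)` for all `f ∈ A(D)`. -/
theorem characters_of_disk_algebra_are_Dirac (μ : ↥diskAlg →ₐ[ℂ] ℂ) (hμ : Continuous μ) :
    ∃! z₀ : ↥Ddisk, ∀ f : ↥diskAlg, μ f = (f : C(Ddisk, ℂ)) z₀ := by
  refine ⟨⟨_, coord_mem μ⟩, fun f => ?_, fun w hw => Subtype.ext (hw diskCoord).symm⟩
  have hc0 : Continuous fun t : ℝ => (⟨_, scaled_mem f t⟩ : ↥diskAlg) :=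
    Continuous.subtype_mk (((f : C(Ddisk, ℂ)).comp contr).curry).continuous _
  have hc1 := hμ.comp hc0
  have hc2 : Continuous fun t : ℝ => (f : C(Ddisk, ℂ)) (contr (t, ⟨_, coord_mem μ⟩)) := by
    fun_prop
  have key := Continuous.ext_on (dense_compl_singleton (0 : ℝ)) hc1 hc2
    (fun t ht => eval_scaled μ f t ht)
  have k0 := congrFun key 0
  have hz : ∀ z : Ddisk, contr (0, z) = z := fun z => Subtype.ext (by simp [contr])
  have e : (⟨_, scaled_mem f 0⟩ : ↥diskAlg) = f := by
    apply Subtype.ext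
    ext z
    exact congrArg _ (hz z)
  simp only [Function.comp_apply, hz, e] at k0
  exact k0
end
end

section
/- The map γ sending a point z₀ ∈ D to the evaluation character δ_{z₀} (where δ_{z₀}(f) = f(z₀)) is a homeomorphism from D onto the set M of all continuous unital ℂ-algebra homomorphisms A(D) → ℂ, where M carries the topology of pointwise convergence (Gelfand topology): μ_j → μ iff μ_j(f) → μ(f) in ℂ for every f ∈ A(D). -/
noncomputable section
open Metric MvPolynomial

/-- The Gelfand spectrum `M` of the disk algebra: the set of continuous unital
`ℂ`-algebra homomorphisms `A(D) → ℂ`, with the topology of pointwise convergence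
(as a subspace of the product `A(D) → ℂ`). -/
abbrev Mchar : Type := {μ : ↥diskAlg → ℂ // Continuous μ ∧ ∃ ν : ↥diskAlg →ₐ[ℂ] ℂ, ⇑ν = μ}

/-- Restriction of a function holomorphic near the disk, as an element of the disk algebra. -/
def resAlg (U : Set ℂ) (hD : Ddisk ⊆ U) (F : ℂ → ℂ) (hF : DifferentiableOn ℂ F U) : ↥diskAlg :=
  ⟨⟨fun z => F z, (hF.continuousOn.mono hD).domRestrict⟩,
    ⟨F, hF.mono (Metric.ball_subset_closedBall.trans hD), fun _ => rfl⟩⟩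

/-- The coordinate function. -/
def coordAlg : ↥diskAlg := resAlg Set.univ (Set.subset_univ _) id differentiableOn_id

lemma char_coord_mem (ν : ↥diskAlg →ₐ[ℂ] ℂ) : ν coordAlg ∈ Ddisk := by
  by_contra hw
  set w := ν coordAlg with hwdef
  have hD : Ddisk ⊆ {w}ᶜ := by
    intro z hz h
    rw [Set.mem_singleton_iff] at h
    exact hw (h ▸ hz)
  let g := resAlg {w}ᶜ hD (fun z => (z - w)⁻¹) (by
    intro z hz
    exact ((differentiableAt_id.sub_const w).inv (sub_ne_zero.2 hz)).differentiableWithinAt)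
  have h1 : (coordAlg - algebraMap ℂ _ w) * g = 1 := by
    apply Subtype.ext
    ext z
    change ((z : ℂ) - w) * ((z : ℂ) - w)⁻¹ = 1
    exact mul_inv_cancel₀ (sub_ne_zero.2 (hD z.2))
  have h2 := congrArg ν h1
  rw [map_mul, map_sub, AlgHom.commutes, map_one] at h2
  simp [← hwdef] at h2

lemma char_res (ν : ↥diskAlg →ₐ[ℂ] ℂ) (U : Set ℂ) (hU : IsOpen U) (hD : Ddisk ⊆ U) (F : ℂ → ℂ)
    (hF : DifferentiableOn ℂ F U) : ν (resAlg U hD F hF) = F (ν coordAlg) := by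
  have hw := char_coord_mem ν
  set w := ν coordAlg with hwdef
  have hg : DifferentiableOn ℂ (dslope F w) U :=
    (Complex.differentiableOn_dslope (hU.mem_nhds (hD hw))).2 hF
  have h1 : resAlg U hD F hF - algebraMap ℂ _ (F w)
      = (coordAlg - algebraMap ℂ _ w) * resAlg U hD _ hg := by
    apply Subtype.ext
    ext z
    change F z - F w = ((z : ℂ) - w) * dslope F w z
    simpa using (sub_smul_dslope F w (z : ℂ)).symm
  have h2 := congrArg ν h1
  rw [map_mul, map_sub, map_sub, AlgHom.commutes, AlgHom.commutes] at h2
  rw [← hwdef] at h2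
  simpa [sub_eq_zero] using h2

/-- Scaling of the disk. -/
def scaleD (p : unitInterval × Ddisk) : Ddisk :=
  ⟨((p.1 : ℝ) : ℂ) * (p.2 : ℂ), by
    have h := p.2.2
    simp only [Ddisk, mem_closedBall_zero_iff] at h ⊢
    rw [norm_mul, Complex.norm_real, Real.norm_eq_abs, abs_of_nonneg p.1.2.1]
    exact mul_le_one₀ p.1.2.2 (norm_nonneg _) h⟩

lemma continuous_scaleD : Continuous scaleD := by
  unfold scaleD
  fun_prop

lemma char_eq (ν : ↥diskAlg →ₐ[ℂ] ℂ) (hν : Continuous ν) (f : ↥diskAlg) :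
    ν f = (f : C(Ddisk, ℂ)) ⟨ν coordAlg, char_coord_mem ν⟩ := by
  obtain ⟨F, hF, hf⟩ := f.2
  let H : C(unitInterval, C(Ddisk, ℂ)) :=
    ContinuousMap.curry ((f : C(Ddisk, ℂ)).comp ⟨scaleD, continuous_scaleD⟩)
  have hH : ∀ r z, H r z = (f : C(Ddisk, ℂ)) (scaleD (r, z)) := fun _ _ => rfl
  have hmem : ∀ r, H r ∈ diskAlg := by
    intro r
    refine ⟨fun z => F (((r : ℝ) : ℂ) * z), ?_, fun z => by rw [hH, hf]; rfl⟩
    refine hF.comp (by fun_prop) ?_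
    intro z hz
    rw [mem_ball_zero_iff] at hz ⊢
    rw [norm_mul, Complex.norm_real, Real.norm_eq_abs, abs_of_nonneg r.2.1]
    exact (mul_le_of_le_one_left (norm_nonneg _) r.2.2).trans_lt hz
  let G : unitInterval → ↥diskAlg := fun r => ⟨H r, hmem r⟩
  have hG : Continuous G := H.continuous.subtype_mk _
  let w : Ddisk := ⟨ν coordAlg, char_coord_mem ν⟩
  have hcl : IsClosed {r | ν (G r) = H r w} :=
    isClosed_eq (hν.comp hG) ((continuous_eval_const (F := C(Ddisk, ℂ)) w).comp H.continuous)
  have hsub : Set.Iio (1 : unitInterval) ⊆ {r | ν (G r) = H r w} := by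
    intro r hr
    have hr1 : (r : ℝ) < 1 := hr
    let U : Set ℂ := (fun z => ((r : ℝ) : ℂ) * z) ⁻¹' Metric.ball 0 1
    have hU : IsOpen U := Metric.isOpen_ball.preimage (by fun_prop)
    have hD : Ddisk ⊆ U := by
      intro z hz
      simp only [Ddisk, mem_closedBall_zero_iff] at hz
      simp only [U, Set.mem_preimage, mem_ball_zero_iff]
      rw [norm_mul, Complex.norm_real, Real.norm_eq_abs, abs_of_nonneg r.2.1]
      exact (mul_le_of_le_one_right r.2.1 hz).trans_lt hr1
    have hFr : DifferentiableOn ℂ (fun z => F (((r : ℝ) : ℂ) * z)) U :=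
      hF.comp (by fun_prop) (fun z hz => hz)
    have hGr : G r = resAlg U hD _ hFr := by
      apply Subtype.ext
      ext z
      exact hf _
    change ν (G r) = H r w
    rw [hGr, char_res ν U hU, hH, hf]
    rfl
  have h1 : (1 : unitInterval) ∈ {r | ν (G r) = H r w} := by
    apply hcl.closure_subset_iff.2 hsub
    rw [closure_Iio' ⟨0, by simp⟩]
    exact Set.mem_Iic.2 le_rfl
  have hs : ∀ z, scaleD (1, z) = z := fun z => Subtype.ext (by simp [scaleD])
  have hG1 : G 1 = f := by
    apply Subtype.ext
    ext z
    change (f : C(Ddisk, ℂ)) (scaleD (1, z)) = _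
    rw [hs]
  have h2 : ν (G 1) = H 1 w := h1
  rw [hG1, hH, hs] at h2
  exact h2

/-- Evaluation characters. -/
def evalChar (z : Ddisk) : Mchar :=
  ⟨fun f => (f : C(Ddisk, ℂ)) z,
    (continuous_eval_const (F := C(Ddisk, ℂ)) z).comp continuous_subtype_val,
    { toFun := fun f => (f : C(Ddisk, ℂ)) z
      map_one' := rfl
      map_mul' := fun _ _ => rfl
      map_zero' := rfl
      map_add' := fun _ _ => rfl
      commutes' := fun _ => rfl }, rfl⟩

lemma evalChar_bijective : Function.Bijective evalChar := by
  constructor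
  · intro a b h
    exact Subtype.ext (congrFun (congrArg Subtype.val h) coordAlg)
  · rintro ⟨_, hc, ν, rfl⟩
    refine ⟨⟨ν coordAlg, char_coord_mem ν⟩, Subtype.ext (funext fun f => ?_)⟩
    exact (char_eq ν hc f).symm

lemma evalChar_continuous : Continuous evalChar :=
  Continuous.subtype_mk (f := fun (z : Ddisk) (f : ↥diskAlg) => (f : C(Ddisk, ℂ)) z)
    (continuous_pi fun f => (f : C(Ddisk, ℂ)).continuous) (fun z => (evalChar z).2)

/-- The map `z₀ ↦ δ_{z₀}` is a homeomorphism of the closed disk `D` onto the spectrum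
`M` of the disk algebra: `M ≅ D`. -/
theorem disk_homeomorphic_to_spectrum :
    ∃ h : ↥Ddisk ≃ₜ Mchar,
      ∀ (z₀ : ↥Ddisk) (f : ↥diskAlg), (h z₀).1 f = (f : C(Ddisk, ℂ)) z₀ := by
  exact ⟨Continuous.homeoOfEquivCompactToT2
    (f := Equiv.ofBijective evalChar evalChar_bijective) evalChar_continuous, fun _ _ => rfl⟩
end
end
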